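/- Regard all quantities as functions of t = k² ∈ (0,1) and define H_n(t) := t(t−1)·(d/dt)·log D_n[w(·,t)]. Then for every integer n ≥ 1, H_n(t) = −t·(α+β+n−1/2)·p1(n) − t·(α+β+n+1/2)·p1(n+1) − n²·t/2, where p1(n) = p1(n)(t). -/

import Mathlib

open MeasureTheory

/-- The Hankel determinant of the moments of `w(x,t) = (1-x²)^α (1-tx²)^β` on `[-1,1]`. -/
noncomputable def hankelW (α β t : ℝ) (n : ℕ) : ℝ :=
  Matrix.det (Matrix.of fun i j : Fin n =>
    ∫ x in (-1:ℝ)..1, x ^ ((i:ℕ) + (j:ℕ)) * ((1 - x ^ 2) ^ α * (1 - t * x ^ 2) ^ β))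

/-!
Fix the monic orthogonal polynomials at one parameter value `t`. Passing from monomials to them is
a unitriangular change of basis, so `D_n[w(·,s)]` is the determinant of their Gram matrix, which is
diagonal at `s = t`; by Jacobi's formula the logarithmic derivative of `D_n` at `t` is
`∑_{i<n} L'(P_i²) / h_i`, where `L` integrates against `w` and `L'` against `∂w/∂t`. Integrating
`d/dx [x^(k+1) (1-x²)^(α+1) (1-tx²)^β]` over `[-1,1]` expresses the derivative of each moment
through moments of the same weight. Hence `2(t-1) L'(P_i²) = L(Q P_i)` with `deg Q ≤ i + 2`;
orthogonality and parity reduce this to two coefficients of `Q`, and the resulting sum over `i`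
telescopes.
-/

section Jacobi

variable {𝕜 𝔸 ι : Type*} [NontriviallyNormedField 𝕜] [NormedCommRing 𝔸] [NormedAlgebra 𝕜 𝔸]
  [Fintype ι] [DecidableEq ι]

lemma trace_adjugate_mul (A B : Matrix ι ι 𝔸) :
    (A.adjugate * B).trace = ∑ i, (A.updateCol i (B.col i)).det := by
  simp only [← Matrix.cramer_apply, Matrix.cramer_eq_adjugate_mulVec]
  rfl

lemma hasDerivAt_det {M : 𝕜 → Matrix ι ι 𝔸} {M' : Matrix ι ι 𝔸} {t : 𝕜}
    (hM : ∀ i j, HasDerivAt (fun s => M s i j) (M' i j) t) :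
    HasDerivAt (fun s => (M s).det) ((M t).adjugate * M').trace t := by
  have hterm (σ : Equiv.Perm ι) : HasDerivAt
      (fun s => ((Equiv.Perm.sign σ : ℤ) : 𝔸) * ∏ i, M s (σ i) i)
      (((Equiv.Perm.sign σ : ℤ) : 𝔸) *
        ∑ i, (∏ j ∈ Finset.univ.erase i, M t (σ j) j) • M' (σ i) i) t :=
    (HasDerivAt.fun_finsetProd fun i _ => hM (σ i) i).const_mul _
  have hcol (σ : Equiv.Perm ι) (i : ι) :
      ∏ j, (M t).updateCol i (M'.col i) (σ j) j
        = (∏ j ∈ Finset.univ.erase i, M t (σ j) j) • M' (σ i) i := by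
    rw [← Finset.prod_erase_mul _ _ (Finset.mem_univ i), Matrix.updateCol_self, smul_eq_mul]
    congr 1
    exact Finset.prod_congr rfl fun j hj => Matrix.updateCol_ne (Finset.ne_of_mem_erase hj)
  simp only [trace_adjugate_mul, Matrix.det_apply', hcol]
  rw [Finset.sum_comm]
  simp only [← Finset.mul_sum]
  exact HasDerivAt.fun_sum fun σ _ => hterm σ

end Jacobi

section MomentFunctional

open Polynomial

variable {R : Type*} [CommRing R]

/-- The Hankel determinant of order `n` of a moment sequence `μ`. -/
def hankelDet (μ : ℕ → R) (n : ℕ) : R :=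
  (Matrix.of fun i j : Fin n => μ ((i : ℕ) + (j : ℕ))).det

/-- The linear functional on polynomials with moments `μ`, that is, with `X ^ k ↦ μ k`. -/
def momentFunctional (μ : ℕ → R) : R[X] →ₗ[R] R :=
  Polynomial.lsum fun k => LinearMap.mulRight R (μ k)

lemma momentFunctional_apply (μ : ℕ → R) (q : R[X]) :
    momentFunctional μ q = q.sum fun k a => a * μ k := rfl

lemma momentFunctional_monomial (μ : ℕ → R) (k : ℕ) (a : R) :
    momentFunctional μ (monomial k a) = a * μ k :=
  sum_monomial_index a (fun k a => a * μ k) (zero_mul _)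

lemma momentFunctional_mul (μ : ℕ → R) {n : ℕ} {p q : R[X]} (hp : p.natDegree < n)
    (hq : q.natDegree < n) :
    momentFunctional μ (p * q) = ∑ k : Fin n, ∑ l : Fin n, p.coeff k * q.coeff l * μ (k + l) := by
  conv_lhs => rw [p.as_sum_range' n hp, q.as_sum_range' n hq]
  simp only [Finset.sum_mul_sum, monomial_mul_monomial, map_sum, momentFunctional_monomial,
    Finset.sum_range]

lemma momentFunctional_comp_neg_X {μ : ℕ → R} (hμ : ∀ k, Odd k → μ k = 0) (q : R[X]) :
    momentFunctional μ (q.comp (-X)) = momentFunctional μ q := by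
  induction q using Polynomial.induction_on' with
  | add p q hp hq => rw [add_comp, map_add, map_add, hp, hq]
  | monomial k a =>
    rw [monomial_comp]
    rcases k.even_or_odd with hk | hk
    · rw [hk.neg_pow, C_mul_X_pow_eq_monomial]
    · rw [hk.neg_pow, mul_neg, map_neg, C_mul_X_pow_eq_monomial, momentFunctional_monomial, hμ k hk,
        mul_zero, neg_zero]

/-- The change from the monomials to monic polynomials of consecutive degrees is unitriangular. -/
lemma hankelDet_eq_det_gram (μ : ℕ → R) {P : ℕ → R[X]} (monic : ∀ n, (P n).Monic)
    (natDegree_eq : ∀ n, (P n).natDegree = n) (n : ℕ) :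
    hankelDet μ n = (Matrix.of fun i j : Fin n => momentFunctional μ (P i * P j)).det := by
  set U : Matrix (Fin n) (Fin n) R := Matrix.of fun i j => (P j).coeff i with hU
  have hdet : U.det = 1 :=
    Matrix.det_matrixOfPolynomials (fun i : Fin n => P i) (fun i => natDegree_eq i) fun i => monic i
  have hlt (i : Fin n) : (P i).natDegree < n := (natDegree_eq i).trans_lt i.2
  have hgram : (Matrix.of fun i j : Fin n => momentFunctional μ (P i * P j))
      = U.transpose * (Matrix.of fun i j : Fin n => μ ((i : ℕ) + (j : ℕ))) * U := by
    ext i j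
    simp only [Matrix.of_apply, momentFunctional_mul μ (hlt i) (hlt j), Matrix.mul_apply,
      Matrix.transpose_apply, hU, Finset.sum_mul]
    rw [Finset.sum_comm]
    exact Finset.sum_congr rfl fun l _ => Finset.sum_congr rfl fun k _ => mul_right_comm _ _ _
  rw [hgram, Matrix.det_mul, Matrix.det_mul, Matrix.det_transpose, hdet, one_mul, mul_one,
    hankelDet]

lemma momentFunctional_of_recurrence {μ μ' : ℕ → R} {a c : R}
    (hμ' : ∀ k, a * μ' k = (c + k + 1) * μ (k + 2) - (k + 1) * μ k) (q : R[X]) :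
    a * momentFunctional μ' q
      = momentFunctional μ (C c * X ^ 2 * q - (1 - X ^ 2) * derivative (X * q)) := by
  induction q using Polynomial.induction_on' with
  | add p q hp hq =>
    rw [map_add, mul_add, hp, hq, ← map_add, mul_add X, derivative_add]
    congr 1
    ring
  | monomial k b =>
    have hpoly : C c * X ^ 2 * monomial k b - (1 - X ^ 2) * derivative (X * monomial k b)
        = monomial (k + 2) ((c + k + 1) * b) - monomial k ((k + 1) * b) := by
      simp only [← C_mul_X_pow_eq_monomial, derivative_mul, derivative_X, derivative_X_pow,
        C_mul, C_add, C_1, map_natCast]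
      cases k <;> simp <;> ring
    rw [hpoly, map_sub]
    simp only [momentFunctional_monomial]
    linear_combination b * hμ' k

lemma hasDerivAt_momentFunctional {𝕜 : Type*} [NontriviallyNormedField 𝕜] {μ : 𝕜 → ℕ → 𝕜}
    {μ' : ℕ → 𝕜} {t : 𝕜} (hμ : ∀ k, HasDerivAt (fun s => μ s k) (μ' k) t) (q : 𝕜[X]) :
    HasDerivAt (fun s => momentFunctional (μ s) q) (momentFunctional μ' q) t :=
  HasDerivAt.fun_sum fun k _ => (hμ k).const_mul (q.coeff k)

lemma momentFunctional_integral {w : ℝ → ℝ} {a b : ℝ} (hw : IntervalIntegrable w volume a b)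
    (q : ℝ[X]) :
    momentFunctional (fun k => ∫ x in a..b, x ^ k * w x) q = ∫ x in a..b, q.eval x * w x := by
  have hint (k : ℕ) : IntervalIntegrable (fun x => q.coeff k * (x ^ k * w x)) volume a b :=
    (hw.continuousOn_mul (by fun_prop)).const_mul _
  simp only [momentFunctional_apply, eval_eq_sum, sum_def, Finset.sum_mul, mul_assoc]
  rw [intervalIntegral.integral_finsetSum fun k _ => hint k]
  simp only [intervalIntegral.integral_const_mul]

end MomentFunctional

section Orthogonal

open Polynomial

variable {R : Type*} [CommRing R]

/-- `P` is the sequence of monic polynomials, `P n` of degree `n`, that are orthogonal for the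
linear functional `L`; `h n` is the value of `L` at the square of `P n`. -/
structure IsMonicOrthogonal (L : R[X] →ₗ[R] R) (P : ℕ → R[X]) (h : ℕ → R) : Prop where
  monic : ∀ n, (P n).Monic
  natDegree_eq : ∀ n, (P n).natDegree = n
  ortho : ∀ m n, L (P m * P n) = if m = n then h n else 0
  norm_ne_zero : ∀ n, h n ≠ 0

/-- The coefficient of `X ^ (n - 2)` in `P n`, written `p1(n)` for monic orthogonal polynomials.
Multiplying by `X ^ 2` gives it the value `0` for `n < 2`. -/
noncomputable def subcoeff (P : ℕ → R[X]) (n : ℕ) : R := (X ^ 2 * P n).coeff n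

lemma coeff_X_mul_derivative (q : R[X]) (k : ℕ) :
    (X * derivative q).coeff k = k * q.coeff k := by
  cases k with
  | zero => simp
  | succ k => rw [coeff_X_mul, coeff_derivative, mul_comm]; push_cast; rfl

lemma coeff_comp_neg_X (q : R[X]) (k : ℕ) : (q.comp (-X)).coeff k = (-1) ^ k * q.coeff k := by
  rw [show (-X : R[X]) = C (-1) * X by simp, comp_C_mul_X_coeff, mul_comm]

namespace IsMonicOrthogonal

variable {L : R[X] →ₗ[R] R} {P : ℕ → R[X]} {h : ℕ → R}

lemma coeff_self (H : IsMonicOrthogonal L P h) (n : ℕ) : (P n).coeff n = 1 := by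
  simpa only [H.natDegree_eq] using (H.monic n).coeff_natDegree

lemma coeff_of_lt (H : IsMonicOrthogonal L P h) {n k : ℕ} (hk : n < k) : (P n).coeff k = 0 :=
  coeff_eq_zero_of_natDegree_lt (by rwa [H.natDegree_eq])

lemma apply_C_mul_mul (H : IsMonicOrthogonal L P h) (a : R) (m n : ℕ) :
    L (C a * P m * P n) = if m = n then a * h n else 0 := by
  rw [mul_assoc, ← smul_eq_C_mul, map_smul, H.ortho, smul_ite, smul_zero, smul_eq_mul]

lemma degree_sub_C_coeff_mul_lt (H : IsMonicOrthogonal L P h) {n : ℕ} {q : R[X]}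
    (hq : q.natDegree ≤ n) : (q - C (q.coeff n) * P n).degree < n := by
  refine (degree_lt_iff_coeff_zero _ _).2 fun k hk => ?_
  rw [coeff_sub, coeff_C_mul]
  rcases hk.eq_or_lt with rfl | hk
  · rw [H.coeff_self, mul_one, sub_self]
  · rw [coeff_eq_zero_of_natDegree_lt (hq.trans_lt hk), H.coeff_of_lt hk, mul_zero, sub_zero]

lemma apply_mul_of_degree_lt (H : IsMonicOrthogonal L P h) {n : ℕ} {q : R[X]}
    (hq : q.degree < n) : L (q * P n) = 0 := by
  have := nontrivial_of_ne _ _ (H.norm_ne_zero 0)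
  let S : Polynomial.Sequence R :=
    ⟨P, fun i => by rw [degree_eq_natDegree (H.monic i).ne_zero, H.natDegree_eq]⟩
  have hspan : Submodule.span R (S '' Set.Iio n) = degreeLT R n :=
    S.span_degreeLT fun i _ => (H.monic i).leadingCoeff ▸ isUnit_one
  have hker : Submodule.span R (S '' Set.Iio n) ≤ (L ∘ₗ LinearMap.mulRight R (P n)).ker := by
    rw [Submodule.span_le]
    rintro _ ⟨m, hm, rfl⟩
    exact (H.ortho m n).trans (if_neg (ne_of_lt hm))
  exact hker (hspan ▸ mem_degreeLT.2 hq)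

lemma apply_mul_of_natDegree_le (H : IsMonicOrthogonal L P h) {n : ℕ} {q : R[X]}
    (hq : q.natDegree ≤ n) : L (q * P n) = q.coeff n * h n := by
  have hL := H.apply_mul_of_degree_lt (H.degree_sub_C_coeff_mul_lt hq)
  rwa [sub_mul, map_sub, H.apply_C_mul_mul, if_pos rfl, sub_eq_zero] at hL

/-- For an even functional, the polynomial `(-1)ⁿ P_{n+1}(-x) + P_{n+1}(x)` has degree at most `n`
and is orthogonal to `P_n`; its leading coefficient is twice the one in question. -/
lemma coeff_pred [IsDomain R] [NeZero (2 : R)] (H : IsMonicOrthogonal L P h)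
    (even : ∀ q, L (q.comp (-X)) = L q) (n : ℕ) : (P (n + 1)).coeff n = 0 := by
  set Q : R[X] := C ((-1) ^ n) * (P (n + 1)).comp (-X) + P (n + 1) with hQ
  have coeff_Q (k : ℕ) : Q.coeff k = ((-1) ^ (n + k) + 1) * (P (n + 1)).coeff k := by
    rw [hQ, coeff_add, coeff_C_mul, coeff_comp_neg_X, pow_add]
    ring
  have natDegree_Q : Q.natDegree ≤ n := by
    refine natDegree_le_iff_coeff_eq_zero.2 fun k hk => ?_
    rcases (Nat.succ_le_of_lt hk).eq_or_lt with rfl | hk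
    · rw [coeff_Q, (show Odd (n + n.succ) from ⟨n, by omega⟩).neg_one_pow, neg_add_cancel, zero_mul]
    · rw [coeff_Q, H.coeff_of_lt hk, mul_zero]
  have reflected : L ((P (n + 1)).comp (-X) * P n) = 0 := by
    rw [← even, mul_comp_neg_X, comp_neg_X_comp_neg_X, mul_comm]
    refine H.apply_mul_of_degree_lt ?_
    rw [degree_comp_neg_X]
    exact (degree_le_of_natDegree_le (H.natDegree_eq n).le).trans_lt (mod_cast n.lt_succ_self)
  have hL : L (Q * P n) = 0 := by
    rw [hQ, add_mul, mul_assoc, ← smul_eq_C_mul, map_add, map_smul, reflected, H.ortho,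
      if_neg (by omega), smul_zero, add_zero]
  rw [H.apply_mul_of_natDegree_le natDegree_Q, coeff_Q, (Even.add_self n).neg_one_pow,
    one_add_one_eq_two] at hL
  simpa [H.norm_ne_zero n, NeZero.ne (2 : R)] using hL

lemma coeff_X_sq_mul_succ [IsDomain R] [NeZero (2 : R)] (H : IsMonicOrthogonal L P h)
    (even : ∀ q, L (q.comp (-X)) = L q) (n : ℕ) : (X ^ 2 * P n).coeff (n + 1) = 0 := by
  cases n with
  | zero => simp [coeff_X_pow_mul']
  | succ n => rw [coeff_X_pow_mul, H.coeff_pred even]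

lemma apply_mul_of_natDegree_le_add_two [IsDomain R] [NeZero (2 : R)]
    (H : IsMonicOrthogonal L P h) (even : ∀ q, L (q.comp (-X)) = L q) {n : ℕ} {q : R[X]}
    (hq : q.natDegree ≤ n + 2) (hq' : q.coeff (n + 1) = 0) :
    L (q * P n) = (q.coeff n - q.coeff (n + 2) * subcoeff P (n + 2)) * h n := by
  have hdeg : (q - C (q.coeff (n + 2)) * P (n + 2)).natDegree ≤ n := by
    refine natDegree_le_iff_coeff_eq_zero.2 fun k hk => ?_
    rw [coeff_sub, coeff_C_mul]
    obtain rfl | hk : k = n + 1 ∨ n + 2 ≤ k := by omega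
    · rw [hq', H.coeff_pred even, mul_zero, sub_zero]
    · rcases hk.eq_or_lt with rfl | hk
      · rw [H.coeff_self, mul_one, sub_self]
      · rw [coeff_eq_zero_of_natDegree_lt (hq.trans_lt hk), H.coeff_of_lt hk, mul_zero, sub_zero]
  have hL := H.apply_mul_of_natDegree_le hdeg
  rwa [sub_mul, map_sub, H.apply_C_mul_mul, if_neg (by omega), sub_zero, coeff_sub, coeff_C_mul,
    ← coeff_X_pow_mul (P (n + 2)) 2 n] at hL

lemma apply_sq_of_recurrence [IsDomain R] [NeZero (2 : R)] {μ μ' : ℕ → R} {a c : R}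
    (H : IsMonicOrthogonal (momentFunctional μ) P h) (odd : ∀ k, Odd k → μ k = 0)
    (hμ' : ∀ k, a * μ' k = (c + k + 1) * μ (k + 2) - (k + 1) * μ k) (n : ℕ) :
    a * momentFunctional μ' (P n * P n)
      = ((c + 2 * n - 3) * subcoeff P n - (c + 2 * n + 1) * subcoeff P (n + 2) - (2 * n + 1))
        * h n := by
  set Q : R[X] := (C (c - 3) * (X ^ 2 * P n) + 2 * (X * derivative (X ^ 2 * P n)))
    - (P n + 2 * (X * derivative (P n))) with hQ
  have hPQ : C c * X ^ 2 * (P n * P n) - (1 - X ^ 2) * derivative (X * (P n * P n)) = Q * P n := by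
    simp only [hQ, derivative_mul, derivative_X, derivative_X_sq, C_sub, map_ofNat]
    ring
  have coeff_Q (k : ℕ) :
      Q.coeff k = (c + 2 * k - 3) * (X ^ 2 * P n).coeff k - (2 * k + 1) * (P n).coeff k := by
    simp only [hQ, coeff_sub, coeff_add, coeff_C_mul, coeff_ofNat_mul, coeff_X_mul_derivative]
    ring
  have natDegree_Q : Q.natDegree ≤ n + 2 := by
    refine natDegree_le_iff_coeff_eq_zero.2 fun k hk => ?_
    obtain ⟨k, rfl⟩ := Nat.exists_eq_add_of_lt hk
    rw [coeff_Q, show n + 2 + k + 1 = n + k + 1 + 2 by ring, coeff_X_pow_mul,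
      H.coeff_of_lt (by omega), H.coeff_of_lt (by omega), mul_zero, mul_zero, sub_zero]
  have even := momentFunctional_comp_neg_X odd
  have coeff_Q_add_one : Q.coeff (n + 1) = 0 := by
    rw [coeff_Q, H.coeff_X_sq_mul_succ even, H.coeff_of_lt n.lt_succ_self, mul_zero, mul_zero,
      sub_zero]
  rw [momentFunctional_of_recurrence hμ', hPQ,
    H.apply_mul_of_natDegree_le_add_two even natDegree_Q coeff_Q_add_one, coeff_Q, coeff_Q,
    coeff_X_pow_mul, H.coeff_self, H.coeff_of_lt (by omega : n < n + 2), ← subcoeff]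
  push_cast
  ring

end IsMonicOrthogonal

end Orthogonal

section LogDeriv

open Polynomial

variable {μ : ℝ → ℕ → ℝ} {μ' : ℕ → ℝ} {t : ℝ} {P : ℕ → ℝ[X]} {h : ℕ → ℝ}

lemma hasDerivAt_log_hankelDet (hμ : ∀ k, HasDerivAt (fun s => μ s k) (μ' k) t)
    (H : IsMonicOrthogonal (momentFunctional (μ t)) P h) (n : ℕ) :
    HasDerivAt (fun s => Real.log (hankelDet (μ s) n))
      (∑ i ∈ Finset.range n, momentFunctional μ' (P i * P i) / h i) t := by
  have gram_t : (Matrix.of fun i j : Fin n => momentFunctional (μ t) (P i * P j))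
      = Matrix.diagonal fun i : Fin n => h i := by
    ext i j
    rw [Matrix.of_apply, H.ortho, Matrix.diagonal_apply]
    by_cases hij : i = j
    · simp [hij]
    · rw [if_neg hij, if_neg (Fin.val_ne_of_ne hij)]
  have hdet := hasDerivAt_det (𝕜 := ℝ) (t := t)
    (M := fun s => Matrix.of fun i j : Fin n => momentFunctional (μ s) (P i * P j))
    (M' := Matrix.of fun i j : Fin n => momentFunctional μ' (P i * P j))
    fun i j => hasDerivAt_momentFunctional hμ (P i * P j)
  have hne : (Matrix.diagonal fun i : Fin n => h i).det ≠ 0 := by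
    rw [Matrix.det_diagonal]
    exact Finset.prod_ne_zero_iff.2 fun i _ => H.norm_ne_zero i
  simp only [hankelDet_eq_det_gram _ H.monic H.natDegree_eq]
  refine (hdet.log (by rwa [gram_t])).congr_deriv ?_
  rw [gram_t, Matrix.adjugate_diagonal, Matrix.det_diagonal, Matrix.trace, Finset.sum_div,
    Finset.sum_range]
  refine Finset.sum_congr rfl fun i _ => ?_
  rw [Matrix.diag_apply, Matrix.diagonal_mul, Matrix.of_apply,
    ← Finset.prod_erase_mul _ _ (Finset.mem_univ i)]
  exact mul_div_mul_left _ _ (Finset.prod_ne_zero_iff.2 fun j _ => H.norm_ne_zero j)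

lemma hasDerivAt_log_hankelDet_of_recurrence {a c : ℝ} (ha : a ≠ 0)
    (hμ : ∀ k, HasDerivAt (fun s => μ s k) (μ' k) t) (odd : ∀ k, Odd k → μ t k = 0)
    (hμ' : ∀ k, a * μ' k = (c + k + 1) * μ t (k + 2) - (k + 1) * μ t k)
    (H : IsMonicOrthogonal (momentFunctional (μ t)) P h) (n : ℕ) :
    HasDerivAt (fun s => Real.log (hankelDet (μ s) n))
      (-((c + 2 * n - 3) * subcoeff P n + (c + 2 * n - 1) * subcoeff P (n + 1) + n ^ 2) / a) t := by
  set G : ℕ → ℝ := fun i =>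
    (c + 2 * i - 3) * subcoeff P i + (c + 2 * i - 1) * subcoeff P (i + 1) + i ^ 2 with hG
  have hterm (i : ℕ) : momentFunctional μ' (P i * P i) / h i = (G i - G (i + 1)) / a := by
    rw [div_eq_div_iff (H.norm_ne_zero i) ha, mul_comm, H.apply_sq_of_recurrence odd hμ']
    simp only [hG]
    push_cast
    ring
  have hG0 : G 0 = 0 := by simp [hG, subcoeff, coeff_X_pow_mul']
  refine (hasDerivAt_log_hankelDet hμ H n).congr_deriv ?_
  rw [Finset.sum_congr rfl fun i _ => hterm i, ← Finset.sum_div, Finset.sum_range_sub', hG0,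
    zero_sub]

end LogDeriv

section ParametricIntegral

open Set Topology

lemma hasDerivAt_integral_mul_of_continuousOn {F F' : ℝ → ℝ → ℝ} {v : ℝ → ℝ} {a b t : ℝ}
    {U : Set ℝ} (hU : U ∈ 𝓝 t) (hv : IntervalIntegrable v volume a b)
    (hF : ∀ s ∈ U, ContinuousOn (F s) (uIcc a b))
    (hF' : ContinuousOn (Function.uncurry F') (U ×ˢ uIcc a b))
    (hderiv : ∀ s ∈ U, ∀ x ∈ uIcc a b, HasDerivAt (fun s => F s x) (F' s x) s) :
    HasDerivAt (fun s => ∫ x in a..b, F s x * v x) (∫ x in a..b, F' t x * v x) t := by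
  obtain ⟨K, hKt, hKU, hK⟩ := local_compact_nhds hU
  obtain ⟨C, hC⟩ := (hK.prod isCompact_uIcc).exists_bound_of_continuousOn
    (hF'.mono (prod_mono_left hKU))
  have hF't : ContinuousOn (F' t) (uIcc a b) :=
    hF'.comp (f := fun x => (t, x)) (by fun_prop) fun x hx => ⟨mem_of_mem_nhds hU, hx⟩
  refine (intervalIntegral.hasDerivAt_integral_of_dominated_loc_of_deriv_le hKt
    (F := fun s x => F s x * v x) (F' := fun s x => F' s x * v x) (bound := fun x => C * |v x|)
    ?_ (hv.continuousOn_mul (hF t (mem_of_mem_nhds hU)))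
    (hv.continuousOn_mul hF't).aestronglyMeasurable_restrict_uIoc ?_ (hv.abs.const_mul C) ?_).2
  · filter_upwards [hU] with s hs
    exact (hv.continuousOn_mul (hF s hs)).aestronglyMeasurable_restrict_uIoc
  · refine Filter.Eventually.of_forall fun x hx s hs => ?_
    rw [norm_mul, Real.norm_eq_abs (v x)]
    gcongr
    exact hC (s, x) ⟨hs, uIoc_subset_uIcc hx⟩
  · exact Filter.Eventually.of_forall fun x hx s hs =>
      (hderiv s (hKU hs) x (uIoc_subset_uIcc hx)).mul_const _

end ParametricIntegral

section Weight

open Set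

variable {α β t : ℝ}

lemma one_sub_mul_sq_pos {x : ℝ} (ht : t < 1) (hx : x ∈ Icc (-1 : ℝ) 1) : 0 < 1 - t * x ^ 2 := by
  have hx1 : x ^ 2 ≤ 1 := (sq_le_one_iff_abs_le_one x).2 (abs_le.2 hx)
  rcases le_total t 0 with ht0 | ht0
  · linarith [mul_nonpos_of_nonpos_of_nonneg ht0 (sq_nonneg x)]
  · linarith [mul_le_of_le_one_right ht0 hx1]

lemma continuousOn_uncurry_one_sub_mul_sq_rpow (β : ℝ) :
    ContinuousOn (fun p : ℝ × ℝ => (1 - p.1 * p.2 ^ 2) ^ β) (Iio 1 ×ˢ Icc (-1) 1) :=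
  ContinuousOn.rpow_const (by fun_prop) fun _ hp => Or.inl (one_sub_mul_sq_pos hp.1 hp.2).ne'

lemma continuousOn_one_sub_mul_sq_rpow (ht : t < 1) (β : ℝ) :
    ContinuousOn (fun x : ℝ => (1 - t * x ^ 2) ^ β) (Icc (-1) 1) :=
  (continuousOn_uncurry_one_sub_mul_sq_rpow β).comp (f := fun x => (t, x)) (by fun_prop)
    fun _ hx => ⟨ht, hx⟩

lemma intervalIntegrable_one_sub_sq_rpow (hα : -1 < α) :
    IntervalIntegrable (fun x : ℝ => (1 - x ^ 2) ^ α) volume (-1) 1 := by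
  have hright : IntervalIntegrable (fun x : ℝ => (1 - x ^ 2) ^ α) volume 0 1 := by
    have h_sub : IntervalIntegrable (fun x : ℝ => (1 - x) ^ α) volume 0 1 := by
      simpa using ((intervalIntegral.intervalIntegrable_rpow' (a := 0) (b := 1) hα).comp_sub_left
        1).symm
    have h_add : ContinuousOn (fun x : ℝ => (1 + x) ^ α) (uIcc 0 1) := by
      rw [uIcc_of_le zero_le_one]
      exact ContinuousOn.rpow_const (by fun_prop) fun x hx => Or.inl (by linarith [hx.1])
    refine (h_sub.mul_continuousOn h_add).congr fun x hx => ?_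
    rw [uIoc_of_le zero_le_one] at hx
    rw [← Real.mul_rpow (by linarith [hx.2]) (by linarith [hx.1])]
    ring_nf
  have hleft : IntervalIntegrable (fun x : ℝ => (1 - x ^ 2) ^ α) volume (-1) 0 := by
    simpa using ((IntervalIntegrable.iff_comp_neg (by finiteness)).1 hright).symm
  exact hleft.trans hright

lemma intervalIntegrable_weight (hα : -1 < α) (β : ℝ) (ht : t < 1) :
    IntervalIntegrable (fun x : ℝ => (1 - x ^ 2) ^ α * (1 - t * x ^ 2) ^ β) volume (-1) 1 := by
  refine (intervalIntegrable_one_sub_sq_rpow hα).mul_continuousOn ?_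
  rw [uIcc_of_le (by norm_num)]
  exact continuousOn_one_sub_mul_sq_rpow ht β

/-- The moments of the weight `(1 - x²)^α (1 - t x²)^β` on `[-1, 1]`. -/
noncomputable def weightMoment (α β t : ℝ) (k : ℕ) : ℝ :=
  ∫ x in (-1 : ℝ)..1, x ^ k * ((1 - x ^ 2) ^ α * (1 - t * x ^ 2) ^ β)

lemma momentFunctional_weightMoment (hα : -1 < α) (β : ℝ) (ht : t < 1) (q : Polynomial ℝ) :
    momentFunctional (weightMoment α β t) q
      = ∫ x in (-1 : ℝ)..1, q.eval x * ((1 - x ^ 2) ^ α * (1 - t * x ^ 2) ^ β) :=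
  momentFunctional_integral (intervalIntegrable_weight hα β ht) q

lemma weightMoment_of_odd (α β t : ℝ) {k : ℕ} (hk : Odd k) : weightMoment α β t k = 0 := by
  have hneg := intervalIntegral.integral_comp_neg (a := -1) (b := 1)
    (fun x : ℝ => x ^ k * ((1 - x ^ 2) ^ α * (1 - t * x ^ 2) ^ β))
  simp only [hk.neg_pow, even_two.neg_pow, neg_mul, intervalIntegral.integral_neg, neg_neg] at hneg
  rw [weightMoment]
  linarith

lemma hasDerivAt_weightMoment (hα : -1 < α) (β : ℝ) (ht : t < 1) (k : ℕ) :
    HasDerivAt (fun s => weightMoment α β s k) (-β * weightMoment α (β - 1) t (k + 2)) t := by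
  have hIcc : uIcc (-1 : ℝ) 1 = Icc (-1) 1 := uIcc_of_le (by norm_num)
  have hderiv (s : ℝ) (hs : s ∈ Iio 1) (x : ℝ) (hx : x ∈ uIcc (-1) 1) :
      HasDerivAt (fun s => x ^ k * (1 - s * x ^ 2) ^ β)
        (-β * x ^ (k + 2) * (1 - s * x ^ 2) ^ (β - 1)) s := by
    have hlin : HasDerivAt (fun s : ℝ => 1 - s * x ^ 2) (-x ^ 2) s := by
      simpa using ((hasDerivAt_id s).mul_const (x ^ 2)).const_sub 1
    refine ((hlin.rpow_const (p := β)
      (Or.inl (one_sub_mul_sq_pos hs (hIcc ▸ hx)).ne')).const_mul (x ^ k)).congr_deriv ?_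
    ring
  have hcont (s : ℝ) (hs : s ∈ Iio 1) :
      ContinuousOn (fun x : ℝ => x ^ k * (1 - s * x ^ 2) ^ β) (uIcc (-1) 1) :=
    ContinuousOn.mul (by fun_prop) (hIcc ▸ continuousOn_one_sub_mul_sq_rpow hs β)
  have hcont' : ContinuousOn (fun p : ℝ × ℝ => -β * p.2 ^ (k + 2) * (1 - p.1 * p.2 ^ 2) ^ (β - 1))
      (Iio 1 ×ˢ uIcc (-1) 1) :=
    ContinuousOn.mul (by fun_prop) (hIcc ▸ continuousOn_uncurry_one_sub_mul_sq_rpow (β - 1))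
  have hint := hasDerivAt_integral_mul_of_continuousOn
    (F := fun s x => x ^ k * (1 - s * x ^ 2) ^ β)
    (F' := fun s x => -β * x ^ (k + 2) * (1 - s * x ^ 2) ^ (β - 1))
    (Iio_mem_nhds ht) (intervalIntegrable_one_sub_sq_rpow hα) hcont hcont' hderiv
  simpa only [weightMoment, ← intervalIntegral.integral_const_mul, mul_assoc,
    mul_comm ((1 - _ ^ 2 : ℝ) ^ α)] using hint

lemma hasDerivAt_pow_mul_weight (α β : ℝ) (ht : t < 1) (k : ℕ) {x : ℝ} (hx : x ∈ Ioo (-1 : ℝ) 1) :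
    HasDerivAt (fun x : ℝ => x ^ (k + 1) * ((1 - x ^ 2) ^ (α + 1) * (1 - t * x ^ 2) ^ β))
      ((k + 1) * (x ^ k * ((1 - x ^ 2) ^ α * (1 - t * x ^ 2) ^ β))
        - (2 * (α + β + 1) + k + 1) * (x ^ (k + 2) * ((1 - x ^ 2) ^ α * (1 - t * x ^ 2) ^ β))
        - 2 * (t - 1) * β * (x ^ (k + 2) * ((1 - x ^ 2) ^ α * (1 - t * x ^ 2) ^ (β - 1)))) x := by
  have hu : 0 < 1 - x ^ 2 := by nlinarith [hx.1, hx.2]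
  have hy : 0 < 1 - t * x ^ 2 := one_sub_mul_sq_pos ht (Ioo_subset_Icc_self hx)
  have hd_sq : HasDerivAt (fun x : ℝ => 1 - x ^ 2) (-(2 * x)) x := by
    simpa using (hasDerivAt_pow 2 x).const_sub 1
  have hd_mul_sq : HasDerivAt (fun x : ℝ => 1 - t * x ^ 2) (-(t * (2 * x))) x := by
    simpa using ((hasDerivAt_pow 2 x).const_mul t).const_sub 1
  have rpow_α : (1 - x ^ 2) ^ (α + 1) = (1 - x ^ 2) ^ α * (1 - x ^ 2) :=
    Real.rpow_add_one hu.ne' α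
  have rpow_β : (1 - t * x ^ 2) ^ β = (1 - t * x ^ 2) ^ (β - 1) * (1 - t * x ^ 2) := by
    rw [← Real.rpow_add_one hy.ne', sub_add_cancel]
  refine ((hasDerivAt_pow (k + 1) x).mul ((hd_sq.rpow_const (p := α + 1) (Or.inl hu.ne')).mul
    (hd_mul_sq.rpow_const (p := β) (Or.inl hy.ne')))).congr_deriv ?_
  simp only [Pi.mul_apply, add_sub_cancel_right, rpow_α, rpow_β, Nat.add_sub_cancel]
  push_cast
  ring

/-- Obtained by integrating the derivative of `x^(k+1) (1-x²)^(α+1) (1-tx²)^β`, which vanishes at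
both endpoints. -/
lemma weightMoment_contiguous (hα : -1 < α) (β : ℝ) (ht : t < 1) (k : ℕ) :
    2 * (t - 1) * (-β * weightMoment α (β - 1) t (k + 2))
      = (2 * (α + β + 1) + k + 1) * weightMoment α β t (k + 2)
        - (k + 1) * weightMoment α β t k := by
  have hmoment (γ : ℝ) (j : ℕ) : IntervalIntegrable
      (fun x : ℝ => x ^ j * ((1 - x ^ 2) ^ α * (1 - t * x ^ 2) ^ γ)) volume (-1) 1 :=
    (intervalIntegrable_weight hα γ ht).continuousOn_mul (by fun_prop)
  have hcont : ContinuousOn (fun x : ℝ => x ^ (k + 1) * ((1 - x ^ 2) ^ (α + 1)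
      * (1 - t * x ^ 2) ^ β)) (Icc (-1) 1) := by
    refine ContinuousOn.mul (by fun_prop) (ContinuousOn.mul ?_ ?_)
    · exact ContinuousOn.rpow_const (by fun_prop) fun _ _ => Or.inr (by linarith)
    · exact continuousOn_one_sub_mul_sq_rpow ht β
  have hlow := (hmoment (β - 1) (k + 2)).const_mul (2 * (t - 1) * β)
  have hhigh := (hmoment β (k + 2)).const_mul (2 * (α + β + 1) + k + 1)
  have hself := (hmoment β k).const_mul ((k : ℝ) + 1)
  have hFTC := intervalIntegral.integral_eq_sub_of_hasDerivAt_of_le (by norm_num) hcont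
    (fun x hx => hasDerivAt_pow_mul_weight α β ht k hx) ((hself.sub hhigh).sub hlow)
  rw [intervalIntegral.integral_sub (hself.sub hhigh) hlow,
    intervalIntegral.integral_sub hself hhigh] at hFTC
  simp only [intervalIntegral.integral_const_mul] at hFTC
  have hboundary : (1 - (1 : ℝ) ^ 2) ^ (α + 1) = 0 := by
    rw [one_pow, sub_self, Real.zero_rpow (by linarith)]
  rw [even_two.neg_pow, hboundary] at hFTC
  simp only [weightMoment]
  linear_combination hFTC

end Weight

theorem stmt_17_general {α β t : ℝ} (hα : -1 < α) (ht : t < 1)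
    {P : ℕ → Polynomial ℝ} {h p1 : ℕ → ℝ}
    (monic : ∀ n, (P n).Monic) (natDegree_eq : ∀ n, (P n).natDegree = n) (hh : ∀ n, h n ≠ 0)
    (ortho : ∀ m n : ℕ,
      (∫ x in (-1:ℝ)..1, (P m).eval x * (P n).eval x * ((1 - x ^ 2) ^ α * (1 - t * x ^ 2) ^ β))
        = if m = n then h n else 0)
    (hp0 : p1 0 = 0) (hp1 : p1 1 = 0) (hp : ∀ n, 2 ≤ n → p1 n = (P n).coeff (n - 2)) (n : ℕ) :
    HasDerivAt (fun s => Real.log (hankelW α β s n))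
      (((α + β + n - 1 / 2) * p1 n + (α + β + n + 1 / 2) * p1 (n + 1) + n ^ 2 / 2) / (1 - t))
      t := by
  have hsub (j : ℕ) : subcoeff P j = p1 j := by
    rw [subcoeff, Polynomial.coeff_X_pow_mul']
    split_ifs with hj
    · exact (hp j hj).symm
    · obtain rfl | rfl : j = 0 ∨ j = 1 := by omega
      exacts [hp0.symm, hp1.symm]
  have H : IsMonicOrthogonal (momentFunctional (weightMoment α β t)) P h :=
    ⟨monic, natDegree_eq, fun m n => by
      simpa only [momentFunctional_weightMoment hα β ht, Polynomial.eval_mul] using ortho m n, hh⟩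
  have ht' : 2 * (t - 1) ≠ 0 := by linarith
  have hderiv := hasDerivAt_log_hankelDet_of_recurrence ht'
    (hasDerivAt_weightMoment hα β ht) (fun k => weightMoment_of_odd α β t)
    (weightMoment_contiguous hα β ht) H n
  refine hderiv.congr_deriv ?_
  rw [hsub, hsub, div_eq_div_iff ht' (sub_pos.2 ht).ne']
  ring

/-- With `H_n(t) = t(t−1) d/dt log D_n[w(·,t)]`, one has, for
`n ≥ 1` and `t = k² ∈ (0,1)`:
`H_n(t) = −t(α+β+n−1/2)p1(n) − t(α+β+n+1/2)p1(n+1) − n²t/2`. -/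
theorem stmt_17
    (α β : ℝ) (hα : -1 < α)
    (P : ℝ → ℕ → Polynomial ℝ) (h : ℝ → ℕ → ℝ) (p1 : ℝ → ℕ → ℝ)
    (hyp : ∀ t ∈ Set.Ioo (0:ℝ) 1,
      (∀ n, (P t n).Monic) ∧ (∀ n, (P t n).natDegree = n) ∧ (∀ n, 0 < h t n) ∧
      (∀ m n : ℕ,
        (∫ x in (-1:ℝ)..1, (P t m).eval x * (P t n).eval x *
            ((1 - x ^ 2) ^ α * (1 - t * x ^ 2) ^ β))
          = if m = n then h t n else 0) ∧
      p1 t 0 = 0 ∧ p1 t 1 = 0 ∧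
      (∀ n : ℕ, 2 ≤ n → p1 t n = (P t n).coeff (n - 2))) :
    ∀ t ∈ Set.Ioo (0:ℝ) 1, ∀ n : ℕ, 1 ≤ n →
      t * (t - 1) * deriv (fun s => Real.log (hankelW α β s n)) t
        = -t * (α + β + (n:ℝ) - 1/2) * p1 t n
          - t * (α + β + (n:ℝ) + 1/2) * p1 t (n + 1)
          - (n:ℝ) ^ 2 * t / 2 := by
  intro t ht n _
  obtain ⟨monic, natDegree_eq, pos, ortho, hp0, hp1, hp⟩ := hyp t ht
  rw [(stmt_17_general hα ht.2 monic natDegree_eq (fun n => (pos n).ne') ortho hp0 hp1 hp n).deriv]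
  field_simp [(sub_pos.2 ht.2).ne']
  ring
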